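/- Let f : I → ℝ be left differentiable at x with left derivative f'⁻(x). If uₙ < vₙ < x for all n, uₙ → x, and limsupₙ (x - uₙ)/(vₙ - uₙ) < ∞, then (f(vₙ) - f(uₙ))/(vₙ - uₙ) → f'⁻(x). -/

import Mathlib

open Filter Topology

/-! Write `f y = f x + f' (y - x) + r y` with `r y = o(y - x)`. The affine part contributes exactly
`f' (v - u)` to `f v - f u`, so the error is `r v - r u`. Since `x - u = O(v - u)`, also
`v - x = (v - u) - (x - u) = O(v - u)`, and both remainders are `o(v - u)`. -/

section

open Asymptotics

variable {𝕜 E F : Type*} [NontriviallyNormedField 𝕜] [NormedAddCommGroup E] [NormedSpace 𝕜 E]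
  [NormedAddCommGroup F] [NormedSpace 𝕜 F]

theorem hasFDerivAtFilter_of_hasFDerivWithinAt_of_isBigO {f : E → F} {f' : E →L[𝕜] F} {s : Set E}
    {x : E} {L : Filter (E × E)} (hf : HasFDerivWithinAt f f' s x)
    (hL : L ≤ 𝓝[s] x ×ˢ 𝓝[s] x) (hO : (fun p ↦ x - p.2) =O[L] fun p ↦ p.1 - p.2) :
    HasFDerivAtFilter f f' L := by
  have hr : (fun y ↦ f y - f x - f' (y - x)) =o[𝓝[s] x] fun y ↦ y - x :=
    hasFDerivWithinAt_iff_isLittleO.1 hf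
  have hO₁ : (fun p ↦ p.1 - x) =O[L] fun p ↦ p.1 - p.2 :=
    ((isBigO_refl _ L).sub hO).congr_left fun p ↦ sub_sub_sub_cancel_right p.1 x p.2
  have hO₂ : (fun p ↦ p.2 - x) =O[L] fun p ↦ p.1 - p.2 :=
    hO.neg_left.congr_left fun p ↦ neg_sub x p.2
  have hr₁ := (hr.comp_tendsto (tendsto_fst.mono_left hL)).trans_isBigO hO₁
  have hr₂ := (hr.comp_tendsto (tendsto_snd.mono_left hL)).trans_isBigO hO₂
  refine hasFDerivAtFilter_iff_isLittleO.2 ((hr₁.sub hr₂).congr_left fun p ↦ ?_)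
  simp only [Function.comp_apply, map_sub]
  abel

theorem tendsto_slope_of_hasDerivAtFilter {f : 𝕜 → F} {f' : F} {L : Filter (𝕜 × 𝕜)}
    (hf : HasDerivAtFilter f f' L) (hne : ∀ᶠ p in L, p.1 ≠ p.2) :
    Tendsto (fun p ↦ slope f p.2 p.1) L (𝓝 f') := by
  have hquot := (hasFDerivAtFilter_iff_isLittleO.1 hf).tendsto_inv_smul_nhds_zero
  refine tendsto_sub_nhds_zero_iff.1 (hquot.congr' ?_)
  filter_upwards [hne] with p hp
  rw [ContinuousLinearMap.toSpanSingleton_apply, smul_sub, inv_smul_smul₀ (sub_ne_zero.2 hp),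
    slope_def_module]

theorem stmt2_general {ι : Type*} {l : Filter ι} {f : 𝕜 → F} {f' : F} {s : Set 𝕜} {x : 𝕜}
    {u v : ι → 𝕜} (hf : HasDerivWithinAt f f' s x) (hu : Tendsto u l (𝓝[s] x))
    (hv : Tendsto v l (𝓝[s] x)) (hne : ∀ᶠ n in l, u n ≠ v n)
    (hO : (fun n ↦ x - u n) =O[l] fun n ↦ v n - u n) :
    Tendsto (fun n ↦ slope f (u n) (v n)) l (𝓝 f') := by
  have hderiv : HasDerivAtFilter f f' (map (fun n ↦ (v n, u n)) l) :=
    hasFDerivAtFilter_of_hasFDerivWithinAt_of_isBigO hf (hv.prodMk hu) (isBigO_map.2 hO)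
  exact tendsto_map'_iff.1 <|
    tendsto_slope_of_hasDerivAtFilter hderiv (eventually_map.2 (hne.mono fun _ ↦ Ne.symm))

end

theorem tendsto_nhdsLE_of_eventuallyLE {ι α : Type*} [TopologicalSpace α] [Preorder α]
    [OrderTopology α] {l : Filter ι} {u v : ι → α} {x : α} (hu : Tendsto u l (𝓝 x))
    (huv : u ≤ᶠ[l] v) (hvx : ∀ᶠ n in l, v n ≤ x) : Tendsto v l (𝓝[≤] x) :=
  tendsto_nhdsWithin_iff.2 ⟨hu.squeeze' tendsto_const_nhds huv hvx, hvx⟩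

theorem isBigO_of_isBoundedUnder_div {ι : Type*} {l : Filter ι} {g h : ι → ℝ}
    (hg : ∀ᶠ n in l, 0 ≤ g n) (hh : ∀ᶠ n in l, 0 < h n)
    (hbd : l.IsBoundedUnder (· ≤ ·) fun n ↦ g n / h n) : g =O[l] h := by
  obtain ⟨C, hC⟩ := hbd
  refine .of_bound C ?_
  filter_upwards [hg, hh, eventually_map.1 hC] with n hgn hhn hCn
  rwa [Real.norm_of_nonneg hgn, Real.norm_of_nonneg hhn.le, ← div_le_iff₀ hhn]

theorem stmt2 (I : Set ℝ) (hIopen : IsOpen I) (hIconn : I.OrdConnected)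
    (f : ℝ → ℝ) (x : ℝ) (hx : x ∈ I) (d : ℝ)
    (hf : HasDerivWithinAt f d (Set.Iic x) x)
    (u v : ℕ → ℝ) (h1 : ∀ n, u n < v n) (h2 : ∀ n, v n < x)
    (hu : Tendsto u atTop (𝓝 x))
    (hbd : ∃ C : ℝ, ∀ᶠ n in atTop, (x - u n) / (v n - u n) ≤ C) :
    Tendsto (fun n => (f (v n) - f (u n)) / (v n - u n)) atTop (𝓝 d) := by
  have hux n : u n < x := (h1 n).trans (h2 n)
  simpa only [slope_def_field] using stmt2_general hf
    (tendsto_nhdsLE_of_eventuallyLE hu .rfl (.of_forall fun n ↦ (hux n).le))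
    (tendsto_nhdsLE_of_eventuallyLE hu (.of_forall fun n ↦ (h1 n).le)
      (.of_forall fun n ↦ (h2 n).le))
    (.of_forall fun n ↦ (h1 n).ne)
    (isBigO_of_isBoundedUnder_div (.of_forall fun n ↦ sub_nonneg.2 (hux n).le)
      (.of_forall fun n ↦ sub_pos.2 (h1 n)) hbd)
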